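/- arXiv:2302.03542 — 3 statements merged into one kernel-verified Lean document; each statement's English description precedes it below -/
import Mathlib

section
/- Let L, L̂ : ℝ^d → ℝ be differentiable, set h := L − L̂, fix η > 0 and arbitrary vectors w_k, w_{k+1}, w*, g_k ∈ ℝ^d, and define φ_k(w) := ⟨g_k, w⟩ + D_{L̂}(w; w_k) + (1/(2η))‖w − w_k‖². Then the following exact identity holds: L(w_{k+1}) − L(w*) = [(1/(2η))‖w_k − w*‖² − D_h(w*; w_k) − (1/(2η))‖w_{k+1} − w*‖² + D_h(w*; w_{k+1})] + ⟨∇L(w_k) − g_k, w_{k+1} − w*⟩ + ⟨∇φ_k(w_{k+1}), w_{k+1} − w*⟩ + D_h(w_{k+1}; w_k) − (1/(2η))‖w_{k+1} − w_k‖² − D_L(w*; w_{k+1}). -/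
open MeasureTheory
open scoped RealInnerProductSpace BigOperators

/-- Bregman divergence `D_ψ(u; v) = ψ(u) − ψ(v) − ⟨∇ψ(v), u − v⟩`. -/
noncomputable def breg {d : ℕ} (ψ : EuclideanSpace ℝ (Fin d) → ℝ)
    (u v : EuclideanSpace ℝ (Fin d)) : ℝ :=
  ψ u - ψ v - ⟪gradient ψ v, u - v⟫

/-- ProxyProx subproblem objective `φ(w) = ⟨g, w⟩ + D_{L̂}(w; w_k) + ‖w − w_k‖²/(2η)`. -/
noncomputable def phi {d : ℕ} (Lh : EuclideanSpace ℝ (Fin d) → ℝ) (η : ℝ)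
    (wk g w : EuclideanSpace ℝ (Fin d)) : ℝ :=
  ⟪g, w⟫ + breg Lh w wk + (1/(2*η)) * ‖w - wk‖^2

/-! The three-point identity turns the three divergences of `h = L - L̂` into
`⟪∇h(w_{k+1}) - ∇h(w_k), w_{k+1} - w*⟫`, and the law of cosines turns the three squared distances
into `-2⟪w_{k+1} - w_k, w_{k+1} - w*⟫`. Adding the gradient error and the gradient of the
subproblem, every gradient cancels except `∇L(w_{k+1})`, and its pairing with `w_{k+1} - w*` is
`L(w_{k+1}) - L(w*) + D_L(w*; w_{k+1})`. -/

open scoped Gradient ComplexConjugate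

section GradientRules

variable {𝕜 F : Type*} [RCLike 𝕜] [NormedAddCommGroup F] [InnerProductSpace 𝕜 F] [CompleteSpace F]
  {f g : F → 𝕜} {f' g' x : F}

theorem hasGradientAt_add (hf : HasGradientAt f f' x) (hg : HasGradientAt g g' x) :
    HasGradientAt (f + g) (f' + g') x := by
  rw [hasGradientAt_iff_hasFDerivAt, map_add]
  exact hf.hasFDerivAt.add hg.hasFDerivAt

theorem hasGradientAt_sub (hf : HasGradientAt f f' x) (hg : HasGradientAt g g' x) :
    HasGradientAt (f - g) (f' - g') x := by
  rw [hasGradientAt_iff_hasFDerivAt, map_sub]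
  exact hf.hasFDerivAt.sub hg.hasFDerivAt

theorem hasGradientAt_sub_const (hf : HasGradientAt f f' x) (c : 𝕜) :
    HasGradientAt (fun y => f y - c) f' x :=
  hf.hasFDerivAt.sub_const c

theorem hasGradientAt_const_mul (hf : HasGradientAt f f' x) (c : 𝕜) :
    HasGradientAt (fun y => c * f y) (conj c • f') x := by
  rw [hasGradientAt_iff_hasFDerivAt, map_smulₛₗ, RCLike.conj_conj]
  exact hf.hasFDerivAt.const_mul c

theorem hasGradientAt_inner_sub (a b x : F) :
    HasGradientAt (fun y => inner 𝕜 a (y - b)) a x :=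
  (innerSL 𝕜 a).hasFDerivAt.comp x ((hasFDerivAt_id x).sub_const b)

theorem gradient_sub (hf : DifferentiableAt 𝕜 f x) (hg : DifferentiableAt 𝕜 g x) :
    ∇ (f - g) x = ∇ f x - ∇ g x :=
  (hasGradientAt_sub hf.hasGradientAt hg.hasGradientAt).gradient

end GradientRules

section HilbertSpace

variable {F : Type*} [NormedAddCommGroup F] [InnerProductSpace ℝ F] [CompleteSpace F]

theorem hasGradientAt_norm_sub_sq (a x : F) :
    HasGradientAt (fun y => ‖y - a‖ ^ 2) ((2 : ℝ) • (x - a)) x := by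
  rw [hasGradientAt_iff_hasFDerivAt]
  refine ((hasFDerivAt_id x).sub_const a).norm_sq.congr_fderiv ?_
  ext v
  simp

/-- The Bregman divergence `D_ψ(u; v)` on a real Hilbert space; `breg` is its Euclidean case. -/
noncomputable def bregmanDiv (ψ : F → ℝ) (u v : F) : ℝ :=
  ψ u - ψ v - ⟪∇ ψ v, u - v⟫

theorem bregmanDiv_three_point (ψ : F → ℝ) (u v w : F) :
    bregmanDiv ψ u v + bregmanDiv ψ v w - bregmanDiv ψ u w = ⟪∇ ψ v - ∇ ψ w, v - u⟫ := by
  simp only [bregmanDiv, inner_sub_left, inner_sub_right]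
  ring

theorem sub_eq_inner_gradient_sub_bregmanDiv (ψ : F → ℝ) (u v : F) :
    ψ v - ψ u = ⟪∇ ψ v, v - u⟫ - bregmanDiv ψ u v := by
  rw [bregmanDiv, ← neg_sub v u, inner_neg_right]
  ring

theorem hasGradientAt_bregmanDiv {ψ : F → ℝ} {u : F} (hψ : DifferentiableAt ℝ ψ u) (v : F) :
    HasGradientAt (fun w => bregmanDiv ψ w v) (∇ ψ u - ∇ ψ v) u :=
  hasGradientAt_sub (hasGradientAt_sub_const hψ.hasGradientAt (ψ v))
    (hasGradientAt_inner_sub (∇ ψ v) v u)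

/-- The ProxyProx subproblem objective on a real Hilbert space, with proximal weight `c`;
`phi` is its Euclidean case with `c = 1 / (2 * η)`. -/
noncomputable def proxyObjective (Lh : F → ℝ) (c : ℝ) (wk g w : F) : ℝ :=
  ⟪g, w⟫ + bregmanDiv Lh w wk + c * ‖w - wk‖ ^ 2

theorem gradient_proxyObjective {Lh : F → ℝ} {w : F} (hLh : DifferentiableAt ℝ Lh w)
    (c : ℝ) (wk g : F) :
    ∇ (proxyObjective Lh c wk g) w = g + (∇ Lh w - ∇ Lh wk) + (2 * c) • (w - wk) := by
  have linear : HasGradientAt (fun y => ⟪g, y⟫) g w := by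
    simpa only [sub_zero] using hasGradientAt_inner_sub (𝕜 := ℝ) g 0 w
  have proximal : HasGradientAt (fun y => c * ‖y - wk‖ ^ 2) ((2 * c) • (w - wk)) w := by
    rw [mul_comm, mul_smul]
    exact hasGradientAt_const_mul (hasGradientAt_norm_sub_sq wk w) c
  exact (hasGradientAt_add (hasGradientAt_add linear (hasGradientAt_bregmanDiv hLh wk))
    proximal).gradient

theorem proxyprox_key_identity_general {L Lh : F → ℝ} {wk wk1 : F}
    (hL : DifferentiableAt ℝ L wk) (hLh : DifferentiableAt ℝ Lh wk)
    (hL1 : DifferentiableAt ℝ L wk1) (hLh1 : DifferentiableAt ℝ Lh wk1)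
    (c : ℝ) (wstar gk : F) :
    L wk1 - L wstar =
      (c * ‖wk - wstar‖ ^ 2 - bregmanDiv (L - Lh) wstar wk
        - c * ‖wk1 - wstar‖ ^ 2 + bregmanDiv (L - Lh) wstar wk1)
      + ⟪∇ L wk - gk, wk1 - wstar⟫
      + ⟪∇ (proxyObjective Lh c wk gk) wk1, wk1 - wstar⟫
      + bregmanDiv (L - Lh) wk1 wk
      - c * ‖wk1 - wk‖ ^ 2
      - bregmanDiv L wstar wk1 := by
  have law_of_cosines : ‖wk - wstar‖ ^ 2 =
      ‖wk1 - wstar‖ ^ 2 - 2 * ⟪wk1 - wk, wk1 - wstar⟫ + ‖wk1 - wk‖ ^ 2 := by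
    rw [real_inner_comm, ← norm_sub_sq_real, sub_sub_sub_cancel_left]
  have gradients_cancel : ∇ L wk1 = (∇ (L - Lh) wk1 - ∇ (L - Lh) wk) + (∇ L wk - gk)
      + ∇ (proxyObjective Lh c wk gk) wk1 - (2 * c) • (wk1 - wk) := by
    rw [gradient_sub hL hLh, gradient_sub hL1 hLh1, gradient_proxyObjective hLh1]
    abel
  calc
    L wk1 - L wstar = ⟪∇ L wk1, wk1 - wstar⟫ - bregmanDiv L wstar wk1 :=
      sub_eq_inner_gradient_sub_bregmanDiv L wstar wk1
    _ = ⟪∇ (L - Lh) wk1 - ∇ (L - Lh) wk, wk1 - wstar⟫ + ⟪∇ L wk - gk, wk1 - wstar⟫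
        + ⟪∇ (proxyObjective Lh c wk gk) wk1, wk1 - wstar⟫
        - 2 * c * ⟪wk1 - wk, wk1 - wstar⟫ - bregmanDiv L wstar wk1 := by
      rw [gradients_cancel, inner_sub_left, inner_add_left, inner_add_left,
        real_inner_smul_left]
    _ = _ := by
      rw [← bregmanDiv_three_point, law_of_cosines]
      ring

end HilbertSpace

/-- The key deterministic identity (equation (9)) in the analysis of ProxyProx. -/
theorem proxyprox_key_identity {d : ℕ}
    (L Lh : EuclideanSpace ℝ (Fin d) → ℝ)
    (hL : Differentiable ℝ L) (hLh : Differentiable ℝ Lh)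
    (η : ℝ) (hη : 0 < η)
    (wk wk1 wstar gk : EuclideanSpace ℝ (Fin d)) :
    L wk1 - L wstar =
      ((1/(2*η)) * ‖wk - wstar‖^2 - breg (fun w => L w - Lh w) wstar wk
        - (1/(2*η)) * ‖wk1 - wstar‖^2 + breg (fun w => L w - Lh w) wstar wk1)
      + ⟪gradient L wk - gk, wk1 - wstar⟫
      + ⟪gradient (phi Lh η wk gk) wk1, wk1 - wstar⟫
      + breg (fun w => L w - Lh w) wk1 wk
      - (1/(2*η)) * ‖wk1 - wk‖^2
      - breg L wstar wk1 :=
  proxyprox_key_identity_general (hL wk) (hLh wk) (hL wk1) (hLh wk1) (1/(2*η)) wstar gk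
end

section
/- Let x_1, …, x_n ∈ ℝ^d and y_1, …, y_n ∈ {0, 1}, let s(z) := 1/(1 + exp(−z)), and define the logistic regression loss L(w) := −(1/n)Σ_{i=1}^n [y_i · ln s(⟨w, x_i⟩) + (1 − y_i) · ln(1 − s(⟨w, x_i⟩))] and the label-free proxy L̂(w) := −(1/n)Σ_{i=1}^n ln s(⟨w, x_i⟩). Then for all w ∈ ℝ^d, L(w) − L̂(w) = (1/n)Σ_{i=1}^n (1 − y_i)⟨w, x_i⟩. In particular, h := L − L̂ is a linear function of w, so ∇h is constant and hence 0-Lipschitz (i.e., Assumption 1 holds with δ = 0). -/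
open scoped RealInnerProductSpace BigOperators

/-! Since `1 - σ z = σ (-z) = σ z * exp (-z)`, the log-likelihood
`y log σ z + (1 - y) log (1 - σ z)` equals `log σ z - (1 - y) z`: the label enters only through a
term linear in `z`. Hence changing the labels changes the logistic loss by a linear function of `w`,
and the proxy is the loss with all labels equal to `1`. -/

lemma log_sigmoid_neg (z : ℝ) : Real.log (Real.sigmoid (-z)) = Real.log (Real.sigmoid z) - z := by
  rw [← Real.sigmoid_mul_rexp_neg, Real.log_mul (Real.sigmoid_pos z).ne' (Real.exp_ne_zero _),
    Real.log_exp, sub_eq_add_neg]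

lemma mul_log_sigmoid_add_mul_log_one_sub_sigmoid (y z : ℝ) :
    y * Real.log (Real.sigmoid z) + (1 - y) * Real.log (1 - Real.sigmoid z) =
      Real.log (Real.sigmoid z) - (1 - y) * z := by
  rw [← Real.sigmoid_neg, log_sigmoid_neg]
  ring

lemma hasGradientAt_inner_right {𝕜 E : Type*} [RCLike 𝕜] [NormedAddCommGroup E]
    [InnerProductSpace 𝕜 E] [CompleteSpace E] (v w : E) :
    HasGradientAt (fun u => inner 𝕜 v u) v w :=
  hasGradientAt_iff_hasFDerivAt.mpr (InnerProductSpace.toDual 𝕜 E v).hasFDerivAt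

section LogisticLoss

variable {E ι : Type*} [NormedAddCommGroup E] [InnerProductSpace ℝ E] [Fintype ι]

/-- The logistic regression loss at `w`, for data points `x i` with labels `y i`. The labels may be
arbitrary reals, and the normalising factor `c` stands for the `1 / n` of the empirical mean. -/
noncomputable def logisticLoss (c : ℝ) (x : ι → E) (y : ι → ℝ) (w : E) : ℝ :=
  -c * ∑ i, (y i * Real.log (Real.sigmoid ⟪w, x i⟫) +
    (1 - y i) * Real.log (1 - Real.sigmoid ⟪w, x i⟫))

lemma logisticLoss_one (c : ℝ) (x : ι → E) (w : E) :
    logisticLoss c x 1 w = -c * ∑ i, Real.log (Real.sigmoid ⟪w, x i⟫) := by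
  simp [logisticLoss]

lemma logisticLoss_sub_logisticLoss (c : ℝ) (x : ι → E) (y y' : ι → ℝ) (w : E) :
    logisticLoss c x y w - logisticLoss c x y' w = c * ∑ i, (y' i - y i) * ⟪w, x i⟫ := by
  simp only [logisticLoss, mul_log_sigmoid_add_mul_log_one_sub_sigmoid]
  rw [← mul_sub, ← Finset.sum_sub_distrib, neg_mul, ← mul_neg, ← Finset.sum_neg_distrib]
  congr! 2 with i
  ring

lemma hasGradientAt_logisticLoss_sub [CompleteSpace E] (c : ℝ) (x : ι → E) (y y' : ι → ℝ) (w : E) :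
    HasGradientAt (fun w => logisticLoss c x y w - logisticLoss c x y' w)
      (c • ∑ i, (y' i - y i) • x i) w := by
  have h_linear : (fun w => logisticLoss c x y w - logisticLoss c x y' w) =
      fun w => ⟪c • ∑ i, (y' i - y i) • x i, w⟫ := by
    funext w
    rw [logisticLoss_sub_logisticLoss, real_inner_comm]
    simp only [real_inner_smul_right, inner_sum]
  rw [h_linear]
  exact hasGradientAt_inner_right _ w

theorem logistic_label_free_proxy_general [CompleteSpace E] (c : ℝ) (x : ι → E) (y : ι → ℝ)
    (s : ℝ → ℝ) (hs : ∀ z, s z = 1 / (1 + Real.exp (-z))) (L Lh : E → ℝ)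
    (hL : ∀ w, L w = -c * ∑ i, (y i * Real.log (s ⟪w, x i⟫)
      + (1 - y i) * Real.log (1 - s ⟪w, x i⟫)))
    (hLh : ∀ w, Lh w = -c * ∑ i, Real.log (s ⟪w, x i⟫)) :
    (∀ w, L w - Lh w = c * ∑ i, (1 - y i) * ⟪w, x i⟫) ∧
    ∀ w, HasGradientAt (fun w => L w - Lh w) (c • ∑ i, (1 - y i) • x i) w := by
  obtain rfl : s = Real.sigmoid := funext fun z => by rw [hs, Real.sigmoid_def, one_div]
  obtain rfl : L = logisticLoss c x y := funext hL
  obtain rfl : Lh = logisticLoss c x 1 := funext fun w => by rw [hLh, logisticLoss_one]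
  exact ⟨logisticLoss_sub_logisticLoss c x y 1, hasGradientAt_logisticLoss_sub c x y 1⟩

end LogisticLoss

/-- Section 3.1 of the paper: for binary logistic regression, the label-free proxy obtained
by assigning every point the label 1 differs from the true loss by a linear function of `w`;
in particular `h := L − L̂` has a constant gradient, which is `0`-Lipschitz
(Assumption 1 holds with `δ = 0`). -/
theorem logistic_label_free_proxy {d n : ℕ}
    (x : Fin n → EuclideanSpace ℝ (Fin d)) (y : Fin n → ℝ)
    (hy : ∀ i, y i = 0 ∨ y i = 1)
    (s : ℝ → ℝ) (hs : ∀ z, s z = 1 / (1 + Real.exp (-z)))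
    (L Lh : EuclideanSpace ℝ (Fin d) → ℝ)
    (hL : ∀ w, L w = -(1/(n:ℝ)) * ∑ i, (y i * Real.log (s ⟪w, x i⟫)
      + (1 - y i) * Real.log (1 - s ⟪w, x i⟫)))
    (hLh : ∀ w, Lh w = -(1/(n:ℝ)) * ∑ i, Real.log (s ⟪w, x i⟫)) :
    (∀ w, L w - Lh w = (1/(n:ℝ)) * ∑ i, (1 - y i) * ⟪w, x i⟫) ∧
    LipschitzWith 0 (gradient (fun w => L w - Lh w)) := by
  obtain ⟨h_sub, h_grad⟩ := logistic_label_free_proxy_general (1 / (n : ℝ)) x y s hs L Lh hL hLh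
  exact ⟨h_sub, gradient_eq h_grad ▸ LipschitzWith.const _⟩
end

section
/- For all real numbers A, B > 0 and every real X satisfying X ≥ A(1 + 4 ln(e + AB)), it holds that X ≥ A(1 + ln(BX)). -/
/-!
For `s > 1`, the tangent line bound `log y ≤ y - 1` at `y = X / (sA)` gives
`A (1 + log (BX)) ≤ A log (sAB) + X / s`: the fraction `1 / s` of `X` absorbs the self-reference,
and the remaining `(1 - 1 / s) X` only has to dominate a logarithm free of `X`. Bernoulli's
inequality `1 + sAB ≤ (1 + AB) ^ s` turns that logarithm into `s log (1 + AB)`, so that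
`X ≥ s² / (s - 1) * A log (1 + AB)` suffices. The factor `s² / (s - 1)` is smallest at `s = 2`,
where it equals `4`.
-/

theorem mul_one_add_log_mul_le {A B X s : ℝ} (hA : 0 < A) (hB : B ≠ 0) (hX : 0 < X) (hs : 0 < s) :
    A * (1 + Real.log (B * X)) ≤ A * Real.log (s * (A * B)) + X / s := by
  have log_split : Real.log (B * X) = Real.log (s * (A * B)) + Real.log (X / (s * A)) := by
    rw [← Real.log_mul (by positivity) (by positivity)]
    congr 1
    field_simp
  have tangent : Real.log (X / (s * A)) ≤ X / (s * A) - 1 :=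
    Real.log_le_sub_one_of_pos (by positivity)
  calc A * (1 + Real.log (B * X))
      ≤ A * (1 + (Real.log (s * (A * B)) + (X / (s * A) - 1))) := by rw [log_split]; gcongr
    _ = A * Real.log (s * (A * B)) + X / s := by field_simp; ring

theorem log_one_add_mul_le_mul_log_add {a p x : ℝ} (ha : 1 ≤ a) (hp : 1 ≤ p)
    (hpx : 0 < 1 + p * x) : Real.log (1 + p * x) ≤ p * Real.log (a + x) := by
  have hx : 0 < 1 + x := by nlinarith
  calc Real.log (1 + p * x)
      ≤ Real.log ((1 + x) ^ p) :=
        Real.log_le_log hpx (one_add_mul_self_le_rpow_one_add (by linarith) hp)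
    _ = p * Real.log (1 + x) := Real.log_rpow hx p
    _ ≤ p * Real.log (a + x) := by gcongr

theorem self_bounding_log_inequality_general {A B X s : ℝ} (hA : 0 < A) (hB : 0 < B) (hs : 1 < s)
    (hX : A * (s * Real.log (1 + s * (A * B))) ≤ (s - 1) * X) :
    A * (1 + Real.log (B * X)) ≤ X := by
  have hs₀ : 0 < s := one_pos.trans hs
  have hX₀ : 0 < X := by
    have log_pos : 0 < Real.log (1 + s * (A * B)) :=
      Real.log_pos (lt_add_of_pos_right 1 (by positivity))
    exact pos_of_mul_pos_right (lt_of_lt_of_le (by positivity) hX) (sub_pos.2 hs).le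
  calc A * (1 + Real.log (B * X))
      ≤ A * Real.log (s * (A * B)) + X / s := mul_one_add_log_mul_le hA hB.ne' hX₀ hs₀
    _ ≤ A * Real.log (1 + s * (A * B)) + X / s := by gcongr; exact le_add_of_nonneg_left zero_le_one
    _ = (A * (s * Real.log (1 + s * (A * B))) + X) / s := by field_simp
    _ ≤ ((s - 1) * X + X) / s := by gcongr
    _ = X := by field_simp; ring

/-- Self-bounding logarithmic inequality from the proof of Corollary 1 of the paper:
for `A, B > 0`, any `X ≥ A(1 + 4 ln(e + AB))` satisfies `X ≥ A(1 + ln(BX))`. -/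
theorem self_bounding_log_inequality (A B X : ℝ) (hA : 0 < A) (hB : 0 < B)
    (hX : A * (1 + 4 * Real.log (Real.exp 1 + A * B)) ≤ X) :
    A * (1 + Real.log (B * X)) ≤ X := by
  have log_le : Real.log (1 + 2 * (A * B)) ≤ 2 * Real.log (Real.exp 1 + A * B) :=
    log_one_add_mul_le_mul_log_add (Real.one_le_exp zero_le_one) one_le_two (by positivity)
  exact self_bounding_log_inequality_general hA hB one_lt_two
    (by linarith [mul_le_mul_of_nonneg_left log_le hA.le])
end
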